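/- arXiv:0812.0335 — 2 statements merged into one kernel-verified Lean document; each statement's English description precedes it below -/
import Mathlib

section
/- Let V be a real inner product space of dimension n ≥ 4, let R be an algebraic curvature tensor on V with Ricci tensor Ric, let κ ∈ ℝ, and define S = R − κS_0 where S_0(X,Y,Z,W) = ⟨X,Z⟩⟨Y,W⟩ − ⟨X,W⟩⟨Y,Z⟩. Then Q(S)(X,Y,Z,W) = Q(R)(X,Y,Z,W) + 2(n−1)κ² S_0(X,Y,Z,W) − 2κ[Ric(X,Z)⟨Y,W⟩ − Ric(X,W)⟨Y,Z⟩ − Ric(Y,Z)⟨X,W⟩ + Ric(Y,W)⟨X,Z⟩] for all X,Y,Z,W ∈ V. In particular, if Ric(X,Y) = (n−1)⟨X,Y⟩ for all X,Y ∈ V, then Q(S) = Q(R) + 2(n−1)κ(κ−2) S_0. -/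
/-!
Since `B` is bilinear and symmetric, `Q(R - κ S₀) = Q(R) - 2κ B(R, S₀) + κ² B(S₀, S₀)`, so everything
rests on `Bop_S0`: for every algebraic curvature tensor `R`, `B(R, S₀)` is the Kulkarni–Nomizu
product of `Ric` with the metric. Indeed, contracting with the entries of `S₀` either traces `R`,
which produces the Ricci terms, or substitutes vectors into `R`; the substituted terms add up to
`2 R(X,Y,Z,W) - 2 R(X,W,Z,Y) + 2 R(X,Z,W,Y)`, which vanishes by the first Bianchi identity.
The tensor `S₀` is itself an algebraic curvature tensor, with Ricci tensor `(n - 1)⟨·,·⟩`, so the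
same formula gives `B(S₀, S₀) = 2 (n - 1) S₀`.
-/


open scoped RealInnerProductSpace
open Finset

variable {V : Type*} [NormedAddCommGroup V] [InnerProductSpace ℝ V]

/-- An algebraic curvature tensor on a real inner product space: a multilinear map
(linearity in the first slot, together with the symmetries, gives full multilinearity)
satisfying the standard symmetries and the first Bianchi identity. -/
structure IsAlgCurvTensor (R : V → V → V → V → ℝ) : Prop where
  addLeft : ∀ X X' Y Z W, R (X + X') Y Z W = R X Y Z W + R X' Y Z W
  smulLeft : ∀ (c : ℝ) (X Y Z W : V), R (c • X) Y Z W = c * R X Y Z W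
  antisymm : ∀ X Y Z W, R X Y Z W = - R Y X Z W
  pairSymm : ∀ X Y Z W, R X Y Z W = R Z W X Y
  bianchi : ∀ X Y Z W, R X Y Z W + R Y Z X W + R Z X Y W = 0

/-- The bilinear expression `B(R,S)`, computed with respect to an orthonormal basis
(the result is independent of the choice of orthonormal basis). -/
noncomputable def Bop [FiniteDimensional ℝ V] (R S : V → V → V → V → ℝ)
    (X Y Z W : V) : ℝ :=
  let b := stdOrthonormalBasis ℝ V
  (1 / 2) * ∑ p, ∑ q,
      (R X Y (b p) (b q) * S Z W (b p) (b q) + R Z W (b p) (b q) * S X Y (b p) (b q))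
  + ∑ p, ∑ q,
      (R X (b p) Z (b q) * S Y (b p) W (b q) + R Y (b p) W (b q) * S X (b p) Z (b q))
  - ∑ p, ∑ q,
      (R X (b p) W (b q) * S Y (b p) Z (b q) + R Y (b p) Z (b q) * S X (b p) W (b q))

/-- `Q(R) = B(R,R)`. -/
noncomputable def Qop [FiniteDimensional ℝ V] (R : V → V → V → V → ℝ) :
    V → V → V → V → ℝ :=
  Bop R R

/-- `R` has nonnegative isotropic curvature. -/
def NonnegIsotropic (R : V → V → V → V → ℝ) : Prop :=
  ∀ e₁ e₂ e₃ e₄ : V, Orthonormal ℝ ![e₁, e₂, e₃, e₄] →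
    0 ≤ R e₁ e₃ e₁ e₃ + R e₁ e₄ e₁ e₄ + R e₂ e₃ e₂ e₃ + R e₂ e₄ e₂ e₄
        - 2 * R e₁ e₂ e₃ e₄

/-- The Ricci tensor of an algebraic curvature tensor. -/
noncomputable def RicciT [FiniteDimensional ℝ V] (R : V → V → V → V → ℝ)
    (X Y : V) : ℝ :=
  ∑ p, R X (stdOrthonormalBasis ℝ V p) Y (stdOrthonormalBasis ℝ V p)

/-- An orthogonal complex structure on `V`. -/
def IsOrthCplx (J : V →ₗ[ℝ] V) : Prop :=
  (∀ X, J (J X) = -X) ∧ (∀ X Y : V, ⟪J X, J Y⟫ = ⟪X, Y⟫)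

/-- A quaternionic structure on `V`: three orthogonal complex structures with `IJK = -id`. -/
def IsQuatStruct (I J K : V →ₗ[ℝ] V) : Prop :=
  IsOrthCplx I ∧ IsOrthCplx J ∧ IsOrthCplx K ∧ ∀ X, I (J (K X)) = -X

/-- `R` is `J`-invariant (Kähler). -/
def IsKaehlerTensor (J : V →ₗ[ℝ] V) (R : V → V → V → V → ℝ) : Prop :=
  ∀ X Y Z W, R X Y (J Z) (J W) = R X Y Z W

/-- `R` is hyper-Kähler with respect to the quaternionic structure `I, J, K`. -/
def IsHyperKaehler (I J K : V →ₗ[ℝ] V) (R : V → V → V → V → ℝ) : Prop :=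
  IsKaehlerTensor I R ∧ IsKaehlerTensor J R ∧ IsKaehlerTensor K R

/-- The curvature tensor `R₀` of quaternionic projective space, associated to a
quaternionic structure `I, J, K`. -/
noncomputable def quatR0 (I J K : V →ₗ[ℝ] V) (X Y Z W : V) : ℝ :=
  (1 / 4) * (⟪X, Z⟫ * ⟪Y, W⟫ - ⟪X, W⟫ * ⟪Y, Z⟫
    + 2 * ⟪I X, Y⟫ * ⟪I Z, W⟫ + ⟪I X, Z⟫ * ⟪I Y, W⟫ - ⟪I X, W⟫ * ⟪I Y, Z⟫
    + 2 * ⟪J X, Y⟫ * ⟪J Z, W⟫ + ⟪J X, Z⟫ * ⟪J Y, W⟫ - ⟪J X, W⟫ * ⟪J Y, Z⟫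
    + 2 * ⟪K X, Y⟫ * ⟪K Z, W⟫ + ⟪K X, Z⟫ * ⟪K Y, W⟫ - ⟪K X, W⟫ * ⟪K Y, Z⟫)

/-- The curvature tensor `S₀` of the unit sphere. -/
def sphereTensor (X Y Z W : V) : ℝ := ⟪X, Z⟫ * ⟪Y, W⟫ - ⟪X, W⟫ * ⟪Y, Z⟫

theorem isAlgCurvTensor_sphereTensor :
    IsAlgCurvTensor (sphereTensor : V → V → V → V → ℝ) where
  addLeft X X' Y Z W := by simp only [sphereTensor, inner_add_left]; ring
  smulLeft c X Y Z W := by simp only [sphereTensor, real_inner_smul_left]; ring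
  antisymm X Y Z W := by simp only [sphereTensor]; ring
  pairSymm X Y Z W := by
    simp only [sphereTensor]
    rw [real_inner_comm X Z, real_inner_comm Y W, real_inner_comm X W, real_inner_comm Y Z]; ring
  bianchi X Y Z W := by
    simp only [sphereTensor]
    rw [real_inner_comm X Z, real_inner_comm X Y, real_inner_comm Y Z]; ring

namespace IsAlgCurvTensor

variable {R : V → V → V → V → ℝ} (hR : IsAlgCurvTensor R)
include hR

theorem swap (X Y Z W : V) : R X Y Z W = R Y X W Z := by
  rw [hR.antisymm X Y Z W, hR.pairSymm Y X Z W, hR.antisymm Z W Y X, neg_neg,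
    hR.pairSymm W Z Y X]

theorem add₃ (X Y Z Z' W : V) : R X Y (Z + Z') W = R X Y Z W + R X Y Z' W := by
  simp only [hR.pairSymm X Y, hR.addLeft]

theorem smul₃ (c : ℝ) (X Y Z W : V) : R X Y (c • Z) W = c * R X Y Z W := by
  simp only [hR.pairSymm X Y, hR.smulLeft]

end IsAlgCurvTensor

/-- For fixed `X, Y`, the bilinear form `(u, v) ↦ R(X, Y, u, v)`. -/
def lastForm {R : V → V → V → V → ℝ} (hR : IsAlgCurvTensor R) (X Y : V) : V →ₗ[ℝ] V →ₗ[ℝ] ℝ :=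
  LinearMap.mk₂ ℝ (fun u v => R X Y u v)
    (fun u u' v => hR.add₃ X Y u u' v)
    (fun c u v => hR.smul₃ c X Y u v)
    (fun u v v' => by simp only [hR.swap X Y u, hR.add₃])
    (fun c u v => by simp only [hR.swap X Y u, hR.smul₃, smul_eq_mul])

/-- For fixed `X, Z`, the bilinear form `(u, v) ↦ R(X, u, Z, v)`. -/
def midForm {R : V → V → V → V → ℝ} (hR : IsAlgCurvTensor R) (X Z : V) : V →ₗ[ℝ] V →ₗ[ℝ] ℝ :=
  LinearMap.mk₂ ℝ (fun u v => R X u Z v)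
    (fun u u' v => by simp only [hR.swap X _ Z, hR.addLeft])
    (fun c u v => by simp only [hR.swap X _ Z, hR.smulLeft, smul_eq_mul])
    (fun u v v' => by simp only [hR.swap X u Z, hR.add₃])
    (fun c u v => by simp only [hR.swap X u Z, hR.smul₃, smul_eq_mul])

section Contraction

variable {ι : Type*} [Fintype ι] (b : OrthonormalBasis ι ℝ V)

theorem sum_linear_mul_inner (f : V →ₗ[ℝ] ℝ) (A : V) : ∑ p, f (b p) * ⟪A, b p⟫ = f A := by
  conv_rhs => rw [← b.sum_repr' A]
  simp only [map_sum, map_smul, smul_eq_mul]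
  exact Finset.sum_congr rfl fun p _ => by rw [real_inner_comm]; ring

theorem sum_bilin_mul_inner (F : V →ₗ[ℝ] V →ₗ[ℝ] ℝ) (A B : V) :
    ∑ p, ∑ q, F (b p) (b q) * (⟪A, b p⟫ * ⟪B, b q⟫) = F A B := by
  have h (p : ι) : ∑ q, F (b p) (b q) * (⟪A, b p⟫ * ⟪B, b q⟫) = F.flip B (b p) * ⟪A, b p⟫ := by
    rw [LinearMap.flip_apply, ← sum_linear_mul_inner b (F (b p)) B, Finset.sum_mul]
    exact Finset.sum_congr rfl fun q _ => by ring
  simp only [h]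
  rw [sum_linear_mul_inner, LinearMap.flip_apply]

theorem sum_bilin_mul_inner_basis (F : V →ₗ[ℝ] V →ₗ[ℝ] ℝ) :
    ∑ p, ∑ q, F (b p) (b q) * ⟪b p, b q⟫ = ∑ p, F (b p) (b p) := by
  simp only [sum_linear_mul_inner]

variable {R : V → V → V → V → ℝ} (hR : IsAlgCurvTensor R)
include hR

theorem sum_last_mul_sphereTensor (X Y Z W : V) :
    ∑ p, ∑ q, R X Y (b p) (b q) * sphereTensor Z W (b p) (b q) = 2 * R X Y Z W := by
  have h1 := sum_bilin_mul_inner b (lastForm hR X Y) Z W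
  have h2 := sum_bilin_mul_inner b (lastForm hR X Y) W Z
  simp only [lastForm, LinearMap.mk₂_apply] at h1 h2
  have h3 : R X Y W Z = - R X Y Z W := by
    rw [hR.pairSymm X Y W Z, hR.antisymm W Z, hR.pairSymm Z W]
  calc _ = ∑ p, ∑ q, R X Y (b p) (b q) * (⟪Z, b p⟫ * ⟪W, b q⟫)
        - ∑ p, ∑ q, R X Y (b p) (b q) * (⟪W, b p⟫ * ⟪Z, b q⟫) := by
        simp only [← Finset.sum_sub_distrib, sphereTensor]
        exact Finset.sum_congr rfl fun p _ => Finset.sum_congr rfl fun q _ => by ring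
    _ = _ := by rw [h1, h2, h3]; ring

/-- The term `⟪Y, W⟫⟪p, q⟫` of `S₀` traces `R`, while `⟪Y, q⟫⟪p, W⟫` substitutes `W` and `Y`. -/
theorem sum_mid_mul_sphereTensor (X Y Z W : V) :
    ∑ p, ∑ q, R X (b p) Z (b q) * sphereTensor Y (b p) W (b q)
      = (∑ p, R X (b p) Z (b p)) * ⟪Y, W⟫ - R X W Z Y := by
  have h1 := sum_bilin_mul_inner b (midForm hR X Z) W Y
  have h2 := sum_bilin_mul_inner_basis b (midForm hR X Z)
  simp only [midForm, LinearMap.mk₂_apply] at h1 h2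
  rw [← h1, ← h2]
  simp only [← Finset.sum_sub_distrib, Finset.sum_mul, sphereTensor]
  exact Finset.sum_congr rfl fun p _ => Finset.sum_congr rfl fun q _ => by
    rw [real_inner_comm (b p) W]; ring

end Contraction

section Finite

variable [FiniteDimensional ℝ V]

/-- `B(R, S₀)` is the Kulkarni–Nomizu product of the Ricci tensor with the metric: the terms without
a trace cancel by the first Bianchi identity. -/
theorem Bop_S0 {R : V → V → V → V → ℝ} (hR : IsAlgCurvTensor R) (X Y Z W : V) :
    Bop R sphereTensor X Y Z W = RicciT R X Z * ⟪Y, W⟫ - RicciT R X W * ⟪Y, Z⟫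
      - RicciT R Y Z * ⟪X, W⟫ + RicciT R Y W * ⟪X, Z⟫ := by
  simp only [Bop, Finset.sum_add_distrib, sum_last_mul_sphereTensor _ hR,
    sum_mid_mul_sphereTensor _ hR, RicciT]
  linarith [hR.bianchi X Y Z W, hR.pairSymm X Y Z W, hR.swap X Z W Y, hR.swap Y Z W X,
    hR.pairSymm Z Y X W, hR.antisymm Y Z X W, hR.pairSymm X W Z Y, hR.swap Y W Z X,
    hR.pairSymm W Y X Z, hR.pairSymm X Z W Y]

theorem RicciT_sphereTensor (X Y : V) :
    RicciT sphereTensor X Y = ((Module.finrank ℝ V : ℝ) - 1) * ⟪X, Y⟫ := by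
  have h := (stdOrthonormalBasis ℝ V).sum_inner_mul_inner X Y
  simp only [RicciT, sphereTensor, Finset.sum_sub_distrib]
  rw [h]
  simp only [real_inner_self_eq_norm_sq, OrthonormalBasis.norm_eq_one, one_pow, mul_one,
    Finset.sum_const, Finset.card_univ, Fintype.card_fin, nsmul_eq_mul]
  ring

/-- The cross terms agree because `B` is symmetric, which holds summand by summand. -/
theorem Qop_sub_smul (R T : V → V → V → V → ℝ) (κ : ℝ) (X Y Z W : V) :
    Qop (fun X Y Z W => R X Y Z W - κ * T X Y Z W) X Y Z W
      = Qop R X Y Z W - 2 * κ * Bop R T X Y Z W + κ ^ 2 * Bop T T X Y Z W := by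
  simp only [Qop, Bop, Finset.mul_sum, ← Finset.sum_add_distrib, ← Finset.sum_sub_distrib]
  exact Finset.sum_congr rfl fun p _ => Finset.sum_congr rfl fun q _ => by ring

end Finite

theorem Q_of_shifted_tensor [FiniteDimensional ℝ V]
    (hn : 4 ≤ Module.finrank ℝ V)
    (R : V → V → V → V → ℝ) (hR : IsAlgCurvTensor R) (κ : ℝ)
    (S₀ : V → V → V → V → ℝ)
    (hS₀ : S₀ = fun X Y Z W => ⟪X, Z⟫ * ⟪Y, W⟫ - ⟪X, W⟫ * ⟪Y, Z⟫)
    (S : V → V → V → V → ℝ)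
    (hS : S = fun X Y Z W => R X Y Z W - κ * S₀ X Y Z W) :
    (∀ X Y Z W : V, Qop S X Y Z W = Qop R X Y Z W
        + 2 * ((Module.finrank ℝ V : ℝ) - 1) * κ ^ 2 * S₀ X Y Z W
        - 2 * κ * (RicciT R X Z * ⟪Y, W⟫ - RicciT R X W * ⟪Y, Z⟫
            - RicciT R Y Z * ⟪X, W⟫ + RicciT R Y W * ⟪X, Z⟫)) ∧
    ((∀ X Y : V, RicciT R X Y = ((Module.finrank ℝ V : ℝ) - 1) * ⟪X, Y⟫) →
      ∀ X Y Z W : V, Qop S X Y Z W = Qop R X Y Z W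
        + 2 * ((Module.finrank ℝ V : ℝ) - 1) * κ * (κ - 2) * S₀ X Y Z W) := by
  obtain rfl : S₀ = sphereTensor := hS₀
  have main (X Y Z W : V) : Qop S X Y Z W = Qop R X Y Z W
      + 2 * ((Module.finrank ℝ V : ℝ) - 1) * κ ^ 2 * sphereTensor X Y Z W
      - 2 * κ * (RicciT R X Z * ⟪Y, W⟫ - RicciT R X W * ⟪Y, Z⟫
          - RicciT R Y Z * ⟪X, W⟫ + RicciT R Y W * ⟪X, Z⟫) := by
    rw [hS, Qop_sub_smul, Bop_S0 hR, Bop_S0 isAlgCurvTensor_sphereTensor]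
    simp only [RicciT_sphereTensor, sphereTensor]
    ring
  refine ⟨main, fun hRic X Y Z W => ?_⟩
  rw [main]
  simp only [hRic, sphereTensor]
  ring
end

section
/- Let V be a real inner product space of dimension 4m ≥ 8 with a quaternionic structure I, J, K, and let R_1 be a hyper-Kähler algebraic curvature tensor on V. If R_1(X,JX,X,JX) ≤ 0 for every unit vector X ∈ V, then R_1 vanishes identically. -/
/-!
Writing `f_L(X) = R(X, LX, X, LX)`, the hypothesis is `f_J ≤ 0`. Conjugation by the quaternions
`1 + K` and `1 + I` carries `J` to `I` and to `-K`; since `R` is invariant under `I` and `K`, this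
gives `f_J(X + KX) = 4 f_I(X)` and `f_J(X + IX) = 4 f_K(X)`, so `f_I` and `f_K` are nonpositive too.
By the Bianchi identity `f_I + f_J + f_K = 0` (the Ricci-flatness of hyper-Kähler tensors,
restricted to a quaternionic line), hence `f_J = 0`. A Kähler tensor with vanishing holomorphic
sectional curvature vanishes by polarization (`kaehler_eq_zero`).
-/

open scoped RealInnerProductSpace
open Finset

variable {V : Type*} [NormedAddCommGroup V] [InnerProductSpace ℝ V]

theorem IsAlgCurvTensor.add₂ {R : V → V → V → V → ℝ} (h : IsAlgCurvTensor R) (X Y Y' Z W : V) :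
    R X (Y + Y') Z W = R X Y Z W + R X Y' Z W := by
  rw [h.antisymm, h.addLeft, h.antisymm Y, h.antisymm Y']; ring

theorem IsAlgCurvTensor.add₃_s17 {R : V → V → V → V → ℝ} (h : IsAlgCurvTensor R) (X Y Z Z' W : V) :
    R X Y (Z + Z') W = R X Y Z W + R X Y Z' W := by
  rw [h.pairSymm, h.addLeft, h.pairSymm Z, h.pairSymm Z']

theorem IsAlgCurvTensor.add₄ {R : V → V → V → V → ℝ} (h : IsAlgCurvTensor R) (X Y Z W W' : V) :
    R X Y Z (W + W') = R X Y Z W + R X Y Z W' := by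
  rw [h.pairSymm, h.add₂, h.pairSymm Z, h.pairSymm Z]

theorem IsAlgCurvTensor.smul₂ {R : V → V → V → V → ℝ} (h : IsAlgCurvTensor R) (c : ℝ)
    (X Y Z W : V) : R X (c • Y) Z W = c * R X Y Z W := by
  rw [h.antisymm, h.smulLeft, h.antisymm Y]; ring

theorem IsAlgCurvTensor.smul₃_s17 {R : V → V → V → V → ℝ} (h : IsAlgCurvTensor R) (c : ℝ)
    (X Y Z W : V) : R X Y (c • Z) W = c * R X Y Z W := by
  rw [h.pairSymm, h.smulLeft, h.pairSymm Z]

theorem IsAlgCurvTensor.smul₄ {R : V → V → V → V → ℝ} (h : IsAlgCurvTensor R) (c : ℝ)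
    (X Y Z W : V) : R X Y Z (c • W) = c * R X Y Z W := by
  rw [h.pairSymm, h.smul₂, h.pairSymm Z]

theorem IsAlgCurvTensor.neg₁ {R : V → V → V → V → ℝ} (h : IsAlgCurvTensor R) (X Y Z W : V) :
    R (-X) Y Z W = - R X Y Z W := by
  rw [← neg_one_smul ℝ X, h.smulLeft]; ring

theorem IsAlgCurvTensor.neg₂ {R : V → V → V → V → ℝ} (h : IsAlgCurvTensor R) (X Y Z W : V) :
    R X (-Y) Z W = - R X Y Z W := by
  rw [← neg_one_smul ℝ Y, h.smul₂]; ring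

theorem IsAlgCurvTensor.neg₃ {R : V → V → V → V → ℝ} (h : IsAlgCurvTensor R) (X Y Z W : V) :
    R X Y (-Z) W = - R X Y Z W := by
  rw [← neg_one_smul ℝ Z, h.smul₃_s17]; ring

theorem IsAlgCurvTensor.neg₄ {R : V → V → V → V → ℝ} (h : IsAlgCurvTensor R) (X Y Z W : V) :
    R X Y Z (-W) = - R X Y Z W := by
  rw [← neg_one_smul ℝ W, h.smul₄]; ring

/-- An algebraic curvature tensor is determined by its sectional curvatures. -/
theorem IsAlgCurvTensor.eq_zero_of_sectional {R : V → V → V → V → ℝ} (h : IsAlgCurvTensor R)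
    (hs : ∀ X Y, R X Y X Y = 0) (X Y Z W : V) : R X Y Z W = 0 := by
  have h1 : ∀ X Y W, R X Y X W = 0 := fun X Y W => by
    have := hs X (Y + W)
    rw [h.add₂, h.add₄, h.add₄, hs, hs, h.pairSymm X W X Y] at this
    linarith
  have h2 : ∀ X Y Z W, R X Y Z W = - R Z Y X W := fun X Y Z W => by
    have := h1 (X + Z) Y W
    rw [h.addLeft, h.add₃_s17, h.add₃_s17, h1, h1] at this
    linarith
  -- `R` is now totally antisymmetric, so the three Bianchi terms coincide.
  have b := h.bianchi X Y Z W
  have e1 : R Y Z X W = R X Y Z W := by rw [h.antisymm, ← h2]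
  have e2 : R Z X Y W = R X Y Z W := by rw [h2, ← h.antisymm]
  linarith

/-- Invariance of a Kähler tensor under `J` in the first pair of arguments. -/
theorem IsKaehlerTensor.left {R : V → V → V → V → ℝ} {J : V →ₗ[ℝ] V} (h : IsAlgCurvTensor R)
    (hJ : IsKaehlerTensor J R) (X Y Z W : V) : R (J X) (J Y) Z W = R X Y Z W := by
  rw [h.pairSymm, hJ, h.pairSymm]

theorem IsKaehlerTensor.swap {R : V → V → V → V → ℝ} {J : V →ₗ[ℝ] V} (h : IsAlgCurvTensor R)
    (hJ : IsKaehlerTensor J R) (hJJ : ∀ X, J (J X) = -X) (X Y Z W : V) :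
    R X (J Y) Z W = - R (J X) Y Z W := by
  rw [← hJ.left h, hJJ, h.neg₂]

/-- Multiplication by `1 + L` scales a pair of arguments of an `L`-invariant tensor by `2`. -/
theorem IsKaehlerTensor.one_add {R : V → V → V → V → ℝ} {L : V →ₗ[ℝ] V} (h : IsAlgCurvTensor R)
    (hL : IsKaehlerTensor L R) (hLL : ∀ X, L (L X) = -X) (X Y Z W : V) :
    R (X + L X) (Y + L Y) Z W = 2 * R X Y Z W := by
  rw [h.addLeft, h.add₂, h.add₂, hL.left h, hL.swap h hLL]; ring

theorem IsKaehlerTensor.one_add_quad {R : V → V → V → V → ℝ} {L : V →ₗ[ℝ] V}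
    (h : IsAlgCurvTensor R) (hL : IsKaehlerTensor L R) (hLL : ∀ X, L (L X) = -X) (X Y : V) :
    R (X + L X) (Y + L Y) (X + L X) (Y + L Y) = 4 * R X Y X Y := by
  rw [hL.one_add h hLL, h.pairSymm, hL.one_add h hLL]; ring

/-- A Kähler tensor with vanishing holomorphic sectional curvature is zero. -/
theorem IsKaehlerTensor.kaehler_eq_zero {R : V → V → V → V → ℝ} {J : V →ₗ[ℝ] V}
    (h : IsAlgCurvTensor R) (hJ : IsKaehlerTensor J R) (hJJ : ∀ X, J (J X) = -X)
    (hf : ∀ X, R X (J X) X (J X) = 0) (X Y Z W : V) : R X Y Z W = 0 := by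
  have sw : ∀ X Y Z W, R X (J Y) Z W = R Y (J X) Z W := fun X Y Z W => by
    rw [hJ.swap h hJJ, h.antisymm (J X)]; ring
  have key : ∀ X Y, 3 * R X (J Y) X (J Y) + R X Y X Y = 0 := fun X Y => by
    -- Adding the expansions `p` and `q` of the quartic `R X (J X) X (J X)` isolates its part of
    -- bidegree `(2, 2)`: `2 R(X, JX, Y, JY) + 4 R(X, JY, X, JY) = 0`.
    have p := hf (X + Y)
    have q := hf (X + -Y)
    simp only [map_add, map_neg, h.addLeft, h.add₂, h.add₃_s17, h.add₄, h.neg₁, h.neg₂, h.neg₃,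
      h.neg₄, hf] at p q
    have s1 := sw Y X
    simp only [s1, fun A B => h.pairSymm A B Y (J X)] at p q
    have a1 := h.pairSymm Y (J Y) X (J X)
    have b := h.bianchi X (J X) Y (J Y)
    have b1 : R (J X) Y X (J Y) = - R X (J Y) X (J Y) := by
      rw [hJ.swap h hJJ X Y]; ring
    have b2 : R Y X (J X) (J Y) = - R X Y X Y := by rw [hJ, h.antisymm]
    linarith
  refine h.eq_zero_of_sectional (fun X Y => ?_) X Y Z W
  have k1 := key X Y
  have k2 := key X (J Y)
  rw [hJJ, h.neg₂, h.neg₄] at k2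
  linarith

theorem hyperKaehler_nonpos_holomorphic_vanishes [FiniteDimensional ℝ V]
    (m : ℕ) (hm : 2 ≤ m) (hdim : Module.finrank ℝ V = 4 * m)
    (I J K : V →ₗ[ℝ] V) (hquat : IsQuatStruct I J K)
    (R₁ : V → V → V → V → ℝ) (hR₁ : IsAlgCurvTensor R₁)
    (hHK : IsHyperKaehler I J K R₁)
    (hnp : ∀ X : V, ‖X‖ = 1 → R₁ X (J X) X (J X) ≤ 0) :
    ∀ X Y Z W : V, R₁ X Y Z W = 0 := by
  obtain ⟨⟨hI, -⟩, ⟨hJ, -⟩, ⟨hK, -⟩, hIJK⟩ := hquat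
  obtain ⟨kI, kJ, kK⟩ := hHK
  have JK : ∀ X, J (K X) = I X := fun X => by
    have := congrArg I (hIJK X)
    rw [hI, map_neg] at this
    exact neg_injective this
  have IJ : ∀ X, I (J X) = K X := fun X => by
    have := hIJK (K X)
    rw [hK, map_neg, map_neg] at this
    exact neg_injective this
  have KJ : ∀ X, K (J X) = - I X := fun X => by rw [← IJ, hJ, map_neg]
  have JI : ∀ X, J (I X) = - K X := fun X => by rw [← JK, hJ]
  have IK : ∀ X, I (K X) = - J X := fun X => by rw [← IJ, hI]
  have KI : ∀ X, K (I X) = J X := fun X => by rw [← JK, KJ, IK, neg_neg]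
  have fJ : ∀ X, R₁ X (J X) X (J X) ≤ 0 := fun X => by
    by_cases hX : X = 0
    · subst hX
      have := hR₁.smulLeft 0 0 (J 0) 0 (J 0)
      rw [zero_smul, zero_mul] at this
      exact this.le
    · have h1 := hnp (‖X‖⁻¹ • X) (norm_smul_inv_norm (𝕜 := ℝ) hX)
      rw [map_smul, hR₁.smulLeft, hR₁.smul₂, hR₁.smul₃_s17, hR₁.smul₄] at h1
      have h2 : 0 < ‖X‖⁻¹ := inv_pos.mpr (norm_pos_iff.mpr hX)
      by_contra! h3
      have : 0 < ‖X‖⁻¹ * (‖X‖⁻¹ * (‖X‖⁻¹ * (‖X‖⁻¹ * R₁ X (J X) X (J X)))) := by positivity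
      linarith
  have fI : ∀ X, R₁ X (I X) X (I X) ≤ 0 := fun X => by
    have h1 := fJ (X + K X)
    have e : J (X + K X) = I X + K (I X) := by rw [map_add, JK, KI, add_comm]
    rw [e, kK.one_add_quad hR₁ hK] at h1
    linarith
  have fK : ∀ X, R₁ X (K X) X (K X) ≤ 0 := fun X => by
    have h1 := fJ (X + I X)
    have e : J (X + I X) = -(K X + I (K X)) := by rw [map_add, JI, IK]; abel
    rw [e, hR₁.neg₂, hR₁.neg₄, neg_neg, kI.one_add_quad hR₁ hI] at h1
    linarith
  refine kJ.kaehler_eq_zero hR₁ hJ (fun X => ?_)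
  -- Rewritten by invariance under `K`, `I`, `J`, the values `f_I`, `f_J`, `f_K` at `X` are the three
  -- terms of a Bianchi sum, up to a common sign.
  have eI : R₁ X (I X) X (I X) = R₁ (K X) (J X) X (I X) := by
    rw [← kK X (I X), KI, hR₁.pairSymm]
  have eJ : R₁ X (J X) X (J X) = R₁ (I X) (K X) X (J X) := by
    rw [← kI X (J X), IJ, hR₁.pairSymm]
  have eK : R₁ X (K X) X (K X) = R₁ (J X) (I X) X (K X) := by
    rw [← kJ X (K X), JK, hR₁.pairSymm]
  have b := hR₁.bianchi (K X) (J X) (I X) X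
  have c : ∀ A B C D, R₁ A B C D = - R₁ A B D C := fun A B C D => by
    rw [hR₁.pairSymm, hR₁.antisymm, hR₁.pairSymm D]
  rw [c (K X), c (J X), c (I X)] at b
  linarith [fI X, fJ X, fK X]
end
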